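/- For all positive real numbers a, b and every integer k ≥ 1, |ψ_k(a) - ψ_k(a+b)| ≤ (k+1)!·min(a,b)·a^{-(k+1)}·(1 + 1/a). -/

import Mathlib

open MeasureTheory

/-- The polygamma function of order `n`: the `(n+1)`-st derivative of `log ∘ Γ`. -/
noncomputable def polygamma (n : ℕ) (z : ℝ) : ℝ :=
  iteratedDeriv (n + 1) (fun x => Real.log (Real.Gamma x)) z

/-!
Log-convexity of `Γ` gives `log x - 1/x ≤ ψ x ≤ log x`, so `ψ (x + N) - ψ (y + N) → 0` and the
functional equation `ψ (x + 1) = ψ x + 1/x` sums to `ψ y - ψ x = ∑ (1/(x+n) - 1/(y+n))`.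
Differentiating termwise, `ψ_k x = (-1)^(k+1) k! ∑ 1/(x+n)^(k+1)` for `k ≥ 1`; in particular
`|ψ_k|` is decreasing, and comparison with a telescoping series gives
`|ψ_k x| ≤ k! x^(-k) (1 + 1/x)`. Since `ψ_k` has constant sign, the increment over `[a, a + b]` is
at most `|ψ_k a|`, and by the mean value inequality it is also at most `b |ψ_{k+1} a|`; the first
bound is used for `a ≤ b`, the second for `b ≤ a`.
-/

section

open Filter Topology Set

/-- The Hurwitz zeta value `ζ(s, x) = ∑ 1/(x+n)^s` for natural `s` and real `x > 0`. For `s ≤ 1`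
the series diverges and the value is the junk value `0` of `tsum`. -/
noncomputable def hurwitzSum (s : ℕ) (x : ℝ) : ℝ := ∑' n : ℕ, ((x + n) ^ s)⁻¹

variable {s k : ℕ} {x y : ℝ}

lemma summable_inv_add_natCast_pow (hs : 1 < s) (hx : 0 < x) :
    Summable fun n : ℕ ↦ ((x + n) ^ s)⁻¹ := by
  refine ((Real.summable_one_div_nat_add_rpow x s).2 (by exact_mod_cast hs)).congr fun n ↦ ?_
  rw [abs_of_pos (by positivity), Real.rpow_natCast, one_div, add_comm]

lemma hurwitzSum_nonneg (s : ℕ) (hx : 0 ≤ x) : 0 ≤ hurwitzSum s x :=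
  tsum_nonneg fun _ ↦ by positivity

lemma antitoneOn_hurwitzSum (hs : 1 < s) : AntitoneOn (hurwitzSum s) (Ioi 0) := by
  intro x (hx : 0 < x) y (hy : 0 < y) hxy
  refine Summable.tsum_le_tsum (fun n ↦ ?_) (summable_inv_add_natCast_pow hs hy)
    (summable_inv_add_natCast_pow hs hx)
  gcongr

lemma inv_add_one_pow_succ_le_sub (hk : k ≠ 0) (hx : 0 < x) :
    ((x + 1) ^ (k + 1))⁻¹ ≤ (x ^ k)⁻¹ - ((x + 1) ^ k)⁻¹ := by
  obtain ⟨m, rfl⟩ := Nat.exists_eq_succ_of_ne_zero hk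
  have hpow : x ^ (m + 1) * (x + 2) ≤ (x + 1) ^ (m + 2) :=
    calc x ^ (m + 1) * (x + 2) = x ^ m * (x * (x + 2)) := by ring
      _ ≤ (x + 1) ^ m * (x + 1) ^ 2 := by gcongr <;> linarith
      _ = (x + 1) ^ (m + 2) := by ring
  rw [le_sub_iff_add_le]
  calc ((x + 1) ^ (m + 2))⁻¹ + ((x + 1) ^ (m + 1))⁻¹ = (x + 2) / (x + 1) ^ (m + 2) := by
        field_simp
        ring
    _ ≤ (x ^ (m + 1))⁻¹ := by
        rw [div_le_iff₀ (by positivity), inv_mul_eq_div, le_div_iff₀ (by positivity)]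
        linarith

lemma hurwitzSum_succ_le (hk : k ≠ 0) (hx : 0 < x) :
    hurwitzSum (k + 1) x ≤ 1 / x ^ k * (1 + 1 / x) := by
  have htail : ∑' n : ℕ, ((x + (n + 1 : ℕ)) ^ (k + 1))⁻¹ ≤ (x ^ k)⁻¹ := by
    refine Real.tsum_le_of_sum_range_le (fun n ↦ by positivity) fun N ↦ ?_
    calc ∑ n ∈ Finset.range N, ((x + (n + 1 : ℕ)) ^ (k + 1))⁻¹
        ≤ ∑ n ∈ Finset.range N, (((x + n) ^ k)⁻¹ - ((x + (n + 1 : ℕ)) ^ k)⁻¹) := by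
          refine Finset.sum_le_sum fun n _ ↦ ?_
          rw [Nat.cast_succ, ← add_assoc]
          exact inv_add_one_pow_succ_le_sub hk (by positivity)
      _ = (x ^ k)⁻¹ - ((x + N) ^ k)⁻¹ := by
          rw [Finset.sum_range_sub' fun n : ℕ ↦ ((x + n) ^ k)⁻¹, Nat.cast_zero, add_zero]
      _ ≤ (x ^ k)⁻¹ := sub_le_self _ (by positivity)
  calc hurwitzSum (k + 1) x = (x ^ (k + 1))⁻¹ + ∑' n : ℕ, ((x + (n + 1 : ℕ)) ^ (k + 1))⁻¹ := by
        rw [hurwitzSum, (summable_inv_add_natCast_pow (by lia) hx).tsum_eq_zero_add, Nat.cast_zero,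
          add_zero]
    _ ≤ (x ^ (k + 1))⁻¹ + (x ^ k)⁻¹ := by gcongr
    _ = 1 / x ^ k * (1 + 1 / x) := by
        field_simp
        ring

lemma hasDerivAt_inv_pow {𝕜 : Type*} [NontriviallyNormedField 𝕜] (s : ℕ) {x : 𝕜} (hx : x ≠ 0) :
    HasDerivAt (fun y ↦ (y ^ s)⁻¹) (-s * (x ^ (s + 1))⁻¹) x := by
  have h := hasDerivAt_zpow (-s : ℤ) x (.inl hx)
  simp only [zpow_neg, zpow_natCast] at h
  refine h.congr_deriv ?_
  rw [← neg_add', zpow_neg]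
  norm_cast

lemma hasDerivAt_tsum_of_hasDerivAt_inv_pow {g : ℕ → ℝ → ℝ} {c : ℝ} (hs : 1 < s) (hx : 0 < x)
    (hg : ∀ (n : ℕ) (y : ℝ), 0 < y → HasDerivAt (g n) (c * ((y + n) ^ s)⁻¹) y)
    (hgx : Summable (g · x)) :
    HasDerivAt (fun y ↦ ∑' n, g n y) (c * hurwitzSum s x) x := by
  have hmem : x ∈ Ioi (x / 2) := half_lt_self hx
  have hpos {y : ℝ} (hy : y ∈ Ioi (x / 2)) : 0 < y := (half_pos hx).trans hy
  have hsum := (summable_inv_add_natCast_pow hs (half_pos hx)).mul_left ‖c‖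
  rw [hurwitzSum, ← tsum_mul_left]
  refine hasDerivAt_tsum_of_isPreconnected hsum isOpen_Ioi isPreconnected_Ioi
    (fun n y hy ↦ hg n y (hpos hy)) (fun n y hy ↦ ?_) hmem hgx hmem
  have := hpos hy
  rw [norm_mul, Real.norm_of_nonneg (by positivity : 0 ≤ ((y + n) ^ s)⁻¹)]
  gcongr
  exact hy.le

lemma hasDerivAt_hurwitzSum (hs : 1 < s) (hx : 0 < x) :
    HasDerivAt (hurwitzSum s) (-s * hurwitzSum (s + 1) x) x :=
  hasDerivAt_tsum_of_hasDerivAt_inv_pow (by lia) hx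
    (fun n y hy ↦ (hasDerivAt_inv_pow s (by positivity)).comp_add_const y (n : ℝ))
    (summable_inv_add_natCast_pow hs hx)

lemma log_Gamma_add_one (hx : 0 < x) :
    Real.log (Real.Gamma (x + 1)) = Real.log (Real.Gamma x) + Real.log x := by
  rw [Real.Gamma_add_one hx.ne', Real.log_mul hx.ne' (Real.Gamma_pos_of_pos hx).ne', add_comm]

lemma differentiableAt_log_Gamma (hx : 0 < x) :
    DifferentiableAt ℝ (fun y ↦ Real.log (Real.Gamma y)) x :=
  (Real.differentiableAt_Gamma fun m ↦ by linarith [m.cast_nonneg (α := ℝ)]).log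
    (Real.Gamma_pos_of_pos hx).ne'

lemma polygamma_zero_eq_deriv : polygamma 0 = deriv fun x ↦ Real.log (Real.Gamma x) :=
  iteratedDeriv_one

lemma polygamma_succ_eq_deriv (k : ℕ) : polygamma (k + 1) = deriv (polygamma k) :=
  iteratedDeriv_succ

lemma polygamma_zero_add_one (hx : 0 < x) : polygamma 0 (x + 1) = polygamma 0 x + x⁻¹ := by
  rw [polygamma_zero_eq_deriv, ← deriv_comp_add_const, ← Real.deriv_log,
    ← deriv_add (differentiableAt_log_Gamma hx) (Real.differentiableAt_log hx.ne')]
  refine EventuallyEq.deriv_eq ?_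
  filter_upwards [Ioi_mem_nhds hx] with y hy using log_Gamma_add_one hy

lemma polygamma_zero_add_natCast (hx : 0 < x) (N : ℕ) :
    polygamma 0 (x + N) = polygamma 0 x + ∑ n ∈ Finset.range N, (x + n)⁻¹ := by
  induction N with
  | zero => simp
  | succ N ih =>
    rw [Nat.cast_succ, ← add_assoc, polygamma_zero_add_one (by positivity), ih,
      Finset.sum_range_succ, add_assoc]

lemma slope_log_Gamma_add_one (hx : 0 < x) :
    slope (fun y ↦ Real.log (Real.Gamma y)) x (x + 1) = Real.log x := by
  rw [slope_def_field, log_Gamma_add_one hx, add_sub_cancel_left, add_sub_cancel_left, div_one]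

lemma polygamma_zero_le_log (hx : 0 < x) : polygamma 0 x ≤ Real.log x := by
  rw [polygamma_zero_eq_deriv, ← slope_log_Gamma_add_one hx]
  exact Real.convexOn_log_Gamma.deriv_le_slope hx (mem_Ioi.2 (by positivity)) (lt_add_one x)
    (differentiableAt_log_Gamma hx)

lemma log_sub_inv_le_polygamma_zero (hx : 0 < x) : Real.log x - x⁻¹ ≤ polygamma 0 x := by
  rw [sub_le_iff_le_add, ← polygamma_zero_add_one hx, polygamma_zero_eq_deriv,
    ← slope_log_Gamma_add_one hx]
  exact Real.convexOn_log_Gamma.slope_le_deriv hx (mem_Ioi.2 (by positivity)) (lt_add_one x)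
    (differentiableAt_log_Gamma (by positivity))

lemma tendsto_polygamma_zero_sub_log :
    Tendsto (fun x ↦ polygamma 0 x - Real.log x) atTop (𝓝 0) := by
  have hinv : Tendsto (fun x : ℝ ↦ -x⁻¹) atTop (𝓝 0) := by
    simpa only [neg_zero] using (tendsto_inv_atTop_zero (𝕜 := ℝ)).neg
  refine tendsto_of_tendsto_of_tendsto_of_le_of_le' hinv tendsto_const_nhds ?_ ?_
  · filter_upwards [eventually_gt_atTop 0] with x hx
    linarith [log_sub_inv_le_polygamma_zero hx]
  · filter_upwards [eventually_gt_atTop 0] with x hx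
    linarith [polygamma_zero_le_log hx]

lemma tendsto_polygamma_zero_add_natCast_sub_log (x : ℝ) :
    Tendsto (fun N : ℕ ↦ polygamma 0 (x + N) - Real.log N) atTop (𝓝 0) := by
  have hshift : Tendsto (fun N : ℕ ↦ x + N) atTop atTop :=
    tendsto_atTop_add_const_left _ x tendsto_natCast_atTop_atTop
  have hlog := (Real.tendsto_log_comp_add_sub_log x).comp tendsto_natCast_atTop_atTop
  rw [← add_zero (0 : ℝ)]
  refine ((tendsto_polygamma_zero_sub_log.comp hshift).add hlog).congr fun N ↦ ?_
  simp only [Function.comp_apply, add_comm x, sub_add_sub_cancel]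

lemma hasSum_polygamma_zero_sub (hx : 0 < x) (hxy : x ≤ y) :
    HasSum (fun n : ℕ ↦ (x + n)⁻¹ - (y + n)⁻¹) (polygamma 0 y - polygamma 0 x) := by
  have hpartial (N : ℕ) : ∑ n ∈ Finset.range N, ((x + n)⁻¹ - (y + n)⁻¹) =
      polygamma 0 y - polygamma 0 x +
        ((polygamma 0 (x + N) - Real.log N) - (polygamma 0 (y + N) - Real.log N)) := by
    rw [Finset.sum_sub_distrib, polygamma_zero_add_natCast hx,
      polygamma_zero_add_natCast (hx.trans_le hxy)]
    ring
  have hnonneg (n : ℕ) : 0 ≤ (x + n)⁻¹ - (y + n)⁻¹ := by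
    rw [sub_nonneg]
    gcongr
  rw [hasSum_iff_tendsto_nat_of_nonneg hnonneg]
  simp only [hpartial]
  simpa only [sub_zero, add_zero] using ((tendsto_polygamma_zero_add_natCast_sub_log x).sub
    (tendsto_polygamma_zero_add_natCast_sub_log y)).const_add (polygamma 0 y - polygamma 0 x)

lemma hasDerivAt_polygamma_zero (hx : 0 < x) : HasDerivAt (polygamma 0) (hurwitzSum 2 x) x := by
  have hterm (n : ℕ) (y : ℝ) (hy : 0 < y) :
      HasDerivAt (fun y : ℝ ↦ (x / 2 + n)⁻¹ - (y + n)⁻¹) (1 * ((y + n) ^ 2)⁻¹) y := by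
    simpa only [neg_neg, one_mul] using
      ((hasDerivAt_inv (by positivity)).comp_add_const y (n : ℝ)).const_sub (x / 2 + n)⁻¹
  have hseries := hasDerivAt_tsum_of_hasDerivAt_inv_pow one_lt_two hx hterm
    (hasSum_polygamma_zero_sub (half_pos hx) (half_le_self hx.le)).summable
  rw [← one_mul (hurwitzSum 2 x)]
  refine (hseries.const_add (polygamma 0 (x / 2))).congr_of_eventuallyEq ?_
  filter_upwards [Ioi_mem_nhds (half_lt_self hx)] with y hy
  rw [(hasSum_polygamma_zero_sub (half_pos hx) hy.le).tsum_eq, add_sub_cancel]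

lemma hasDerivAt_polygamma_hurwitzSum (k : ℕ) (hx : 0 < x) :
    HasDerivAt (polygamma k) ((-1) ^ k * (k + 1).factorial * hurwitzSum (k + 2) x) x := by
  induction k generalizing x with
  | zero => simpa using hasDerivAt_polygamma_zero hx
  | succ k ih =>
    have hderiv := (hasDerivAt_hurwitzSum (s := k + 2) (by lia) hx).const_mul
      ((-1) ^ k * ((k + 1).factorial : ℝ))
    refine (hderiv.congr_of_eventuallyEq ?_).congr_deriv ?_
    · filter_upwards [Ioi_mem_nhds hx] with y hy
      rw [polygamma_succ_eq_deriv, (ih hy).deriv]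
    · rw [Nat.factorial_succ (k + 1)]
      push_cast
      ring

lemma hasDerivAt_polygamma (k : ℕ) (hx : 0 < x) :
    HasDerivAt (polygamma k) (polygamma (k + 1) x) x := by
  rw [polygamma_succ_eq_deriv]
  exact (hasDerivAt_polygamma_hurwitzSum k hx).differentiableAt.hasDerivAt

lemma polygamma_eq_hurwitzSum (hk : k ≠ 0) (hx : 0 < x) :
    polygamma k x = (-1) ^ (k + 1) * k.factorial * hurwitzSum (k + 1) x := by
  obtain ⟨m, rfl⟩ := Nat.exists_eq_succ_of_ne_zero hk
  rw [Nat.succ_eq_add_one, polygamma_succ_eq_deriv, (hasDerivAt_polygamma_hurwitzSum m hx).deriv]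
  ring

lemma abs_polygamma (hk : k ≠ 0) (hx : 0 < x) :
    |polygamma k x| = k.factorial * hurwitzSum (k + 1) x := by
  rw [polygamma_eq_hurwitzSum hk hx, abs_mul, abs_mul, abs_neg_one_pow, one_mul, Nat.abs_cast,
    abs_of_nonneg (hurwitzSum_nonneg _ hx.le)]

lemma antitoneOn_abs_polygamma (hk : k ≠ 0) : AntitoneOn (|polygamma k ·|) (Ioi 0) := by
  intro x hx y hy hxy
  simp only [abs_polygamma hk hx, abs_polygamma hk hy]
  gcongr
  exact antitoneOn_hurwitzSum (by lia) hx hy hxy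

lemma abs_polygamma_le (hk : k ≠ 0) (hx : 0 < x) :
    |polygamma k x| ≤ k.factorial / x ^ k * (1 + 1 / x) := by
  rw [abs_polygamma hk hx, div_eq_mul_one_div, mul_assoc]
  gcongr
  exact hurwitzSum_succ_le hk hx

lemma abs_polygamma_sub_le_abs (hk : k ≠ 0) (hx : 0 < x) (hxy : x ≤ y) :
    |polygamma k x - polygamma k y| ≤ |polygamma k x| := by
  have hy : 0 < y := hx.trans_le hxy
  have hanti : hurwitzSum (k + 1) y ≤ hurwitzSum (k + 1) x :=
    antitoneOn_hurwitzSum (by lia) hx hy hxy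
  rw [polygamma_eq_hurwitzSum hk hx, polygamma_eq_hurwitzSum hk hy, ← mul_sub, abs_mul,
    abs_mul _ (hurwitzSum _ x), abs_of_nonneg (sub_nonneg.2 hanti),
    abs_of_nonneg (hurwitzSum_nonneg _ hx.le)]
  gcongr
  exact sub_le_self _ (hurwitzSum_nonneg _ hy.le)

lemma abs_polygamma_sub_le_mul (k : ℕ) (hx : 0 < x) (hxy : x ≤ y) :
    |polygamma k x - polygamma k y| ≤ |polygamma (k + 1) x| * (y - x) := by
  have hpos {z : ℝ} (hz : z ∈ Ici x) : 0 < z := hx.trans_le hz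
  have hmvt := (convex_Ici x).norm_image_sub_le_of_norm_hasDerivWithin_le
    (fun z hz ↦ (hasDerivAt_polygamma k (hpos hz)).hasDerivWithinAt)
    (fun z hz ↦ antitoneOn_abs_polygamma k.succ_ne_zero hx (hpos hz) hz) self_mem_Ici hxy
  rwa [norm_sub_rev, Real.norm_of_nonneg (sub_nonneg.2 hxy)] at hmvt

end

theorem polygamma_diff_bound (k : ℕ) (hk : 1 ≤ k) (a b : ℝ) (ha : 0 < a) (hb : 0 < b) :
    |polygamma k a - polygamma k (a + b)| ≤
      ((k + 1).factorial : ℝ) * min a b / a ^ (k + 1) * (1 + 1 / a) := by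
  have hk' : k ≠ 0 := Nat.one_le_iff_ne_zero.1 hk
  have hab : a ≤ a + b := le_add_of_nonneg_right hb.le
  rcases le_total a b with h | h
  · rw [min_eq_left h]
    calc |polygamma k a - polygamma k (a + b)|
        ≤ |polygamma k a| := abs_polygamma_sub_le_abs hk' ha hab
      _ ≤ k.factorial / a ^ k * (1 + 1 / a) := abs_polygamma_le hk' ha
      _ ≤ (k + 1).factorial / a ^ k * (1 + 1 / a) := by
          gcongr
          exact k.le_succ
      _ = (k + 1).factorial * a / a ^ (k + 1) * (1 + 1 / a) := by
          rw [pow_succ, mul_div_mul_right _ _ ha.ne']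
  · rw [min_eq_right h]
    calc |polygamma k a - polygamma k (a + b)|
        ≤ |polygamma (k + 1) a| * (a + b - a) := abs_polygamma_sub_le_mul k ha hab
      _ ≤ (k + 1).factorial / a ^ (k + 1) * (1 + 1 / a) * (a + b - a) := by
          gcongr
          exact abs_polygamma_le k.succ_ne_zero ha
      _ = (k + 1).factorial * b / a ^ (k + 1) * (1 + 1 / a) := by ring
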